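/- Let A be a standard operator algebra on a complex Banach space E of dimension at least three, and let φ : A → A be a (not necessarily linear, additive or continuous) map whose range contains all rank-one idempotent operators on E. Suppose for any a, b ∈ A there is an algebra automorphism θ_{a,b} of A with φ(a) + φ(b) = θ_{a,b}(a + b). Then φ maps the algebra F(E) of bounded finite-rank operators into itself, and the restriction of φ to F(E) is either an algebra automorphism or an algebra anti-automorphism of F(E). -/

import Mathlib

set_option synthInstance.maxHeartbeats 1000000
set_option maxHeartbeats 1000000

open Cardinal

/-- An algebra automorphism of a complex algebra: a bijective complex-linear map
which is multiplicative. -/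
def IsAlgAutomorphism {A : Type*} [Ring A] [Algebra ℂ A] (θ : A → A) : Prop :=
  Function.Bijective θ ∧ IsLinearMap ℂ θ ∧ ∀ a b : A, θ (a * b) = θ a * θ b

/-!
An automorphism of a standard operator algebra permutes the minimal idempotents, which are the
rank-one idempotents. These span `F(E)`, so the automorphism preserves `F(E)` and the trace on it.
Hence `tr (φ a ^ 3) = tr (a ^ 3)`, and `tr ((φ a + φ b) ^ 2) = tr ((a + b) ^ 2)`, which polarises to
`tr (φ a * φ b) = tr (a * b)`. As the trace form is nondegenerate and the range of `φ` spans `F(E)`,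
`φ` is linear on `F(E)`. Now the cubic identity can be polarised as well, giving
`tr (φ b ^ 2 * φ a) = tr (b ^ 2 * a) = tr (φ (b ^ 2) * φ a)`, that is `φ (b ^ 2) = φ b ^ 2`.
By Herstein's theorem, a Jordan homomorphism onto a prime ring such as `F(E)` is multiplicative
or anti-multiplicative.
-/

/-- Prime rings: the product of two nonzero ideals is nonzero, stated elementwise. The zero ring
is allowed. -/
def IsPrimeRing (R : Type*) [NonUnitalSemiring R] : Prop :=
  ∀ a b : R, (∀ r, a * r * b = 0) → a = 0 ∨ b = 0

theorem IsPrimeRing.eq_zero_or_eq_zero_of_mul_mul_add_eq_zero {S : Type*}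
    [NonUnitalRing S] (hS : IsPrimeRing S) (h2 : IsSMulRegular S 2) {u v : S}
    (h : ∀ s, u * s * v + v * s * u = 0) : u = 0 ∨ v = 0 := by
  have swap (t : S) : u * t * v = -(v * t * u) := eq_neg_of_add_eq_zero_left (h t)
  refine hS u v fun r => ?_
  suffices ∀ s, u * r * v * s * (u * r * v) = 0 from (hS _ _ this).elim id id
  intro s
  have self_eq_neg : u * r * v * s * (u * r * v) = -(u * r * v * s * (u * r * v)) :=
    calc u * r * v * s * (u * r * v)
      _ = u * (r * v * s * u * r) * v := by simp only [mul_assoc]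
      _ = -(v * (r * v * s) * u * (r * u)) := by rw [swap]; simp only [mul_assoc]
      _ = u * (r * v * s) * v * (r * u) := by rw [swap (r * v * s), neg_mul]
      _ = u * r * v * s * (v * r * u) := by simp only [mul_assoc]
      _ = -(u * r * v * s * (u * r * v)) := by rw [swap r, mul_neg, neg_neg]
  refine h2.right_eq_zero_of_smul ?_
  rw [two_smul]
  exact add_eq_zero_iff_eq_neg.mpr self_eq_neg

-- A group is not the union of two proper subgroups.
theorem eq_zero_or_eq_zero_of_forall_apply {G H : Type*} [AddZeroClass G] [AddZeroClass H]
    {p q : G →+ H} (h : ∀ x, p x = 0 ∨ q x = 0) : p = 0 ∨ q = 0 := by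
  by_contra! hne
  obtain ⟨x, hx⟩ := DFunLike.ne_iff.mp hne.1
  obtain ⟨y, hy⟩ := DFunLike.ne_iff.mp hne.2
  have hqx : q x = 0 := (h x).resolve_left hx
  have hpy : p y = 0 := (h y).resolve_right hy
  rcases h (x + y) with hxy | hxy
  · exact hx (by simpa [hpy] using hxy)
  · exact hy (by simpa [hqx] using hxy)

/-- Jordan homomorphisms: additive maps preserving squares. In the absence of 2-torsion this is
equivalent to preserving the Jordan product `a * b + b * a`. -/
def IsJordanHom {R S : Type*} [NonUnitalNonAssocSemiring R] [NonUnitalNonAssocSemiring S]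
    (f : R →+ S) : Prop :=
  ∀ a, f (a * a) = f a * f a

namespace IsJordanHom

variable {R S : Type*} [NonUnitalRing R] [NonUnitalRing S] {f : R →+ S}

theorem map_mul_add_mul_swap (hf : IsJordanHom f) (a b : R) :
    f (a * b + b * a) = f a * f b + f b * f a := by
  have h := hf (a + b)
  have expand : (a + b) * (a + b) = a * a + b * b + (a * b + b * a) := by noncomm_ring
  rw [expand, map_add, map_add f (a * a), hf a, hf b, map_add f a] at h
  refine add_left_cancel (h.trans ?_)
  noncomm_ring

theorem map_mul_mul_self (hf : IsJordanHom f) (h2 : IsSMulRegular S 2) (a b : R) :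
    f (a * b * a) = f a * f b * f a := by
  apply h2
  have expand : 2 • (a * b * a) =
      a * (a * b + b * a) + (a * b + b * a) * a - (a * a * b + b * (a * a)) := by noncomm_ring
  simp only
  rw [← map_nsmul, expand, map_sub, hf.map_mul_add_mul_swap, hf.map_mul_add_mul_swap,
    hf.map_mul_add_mul_swap, hf a]
  noncomm_ring

theorem map_mul_mul_add_mul_mul_swap (hf : IsJordanHom f) (h2 : IsSMulRegular S 2)
    (a b c : R) :
    f (a * b * c + c * b * a) = f a * f b * f c + f c * f b * f a := by
  have h := hf.map_mul_mul_self h2 (a + c) b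
  have expand : (a + c) * b * (a + c) =
      a * b * a + c * b * c + (a * b * c + c * b * a) := by noncomm_ring
  rw [expand, map_add, map_add f (a * b * a), hf.map_mul_mul_self h2, hf.map_mul_mul_self h2,
    map_add f a] at h
  refine add_left_cancel (h.trans ?_)
  noncomm_ring

theorem map_mul_eq_or_map_mul_eq_swap (hf : IsJordanHom f) (h2 : IsSMulRegular S 2)
    (hS : IsPrimeRing S) (hsurj : Function.Surjective f) (a b : R) :
    f (a * b) = f a * f b ∨ f (a * b) = f b * f a := by
  simp only [← sub_eq_zero (a := f (a * b))]
  refine hS.eq_zero_or_eq_zero_of_mul_mul_add_eq_zero h2 (hsurj.forall.mpr fun r => ?_)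
  have map_swap : f (b * a) = f a * f b + f b * f a - f (a * b) := by
    rw [← hf.map_mul_add_mul_swap, map_add, add_sub_cancel_left]
  -- `(ab)r(ba) + (ba)r(ab) = a(brb)a + b(ara)b`, and `f` respects both sides.
  have h := hf.map_mul_mul_add_mul_mul_swap h2 (a * b) r (b * a)
  have regroup : a * b * r * (b * a) + b * a * r * (a * b) =
      a * (b * r * b) * a + b * (a * r * a) * b := by noncomm_ring
  simp only [regroup, map_add, hf.map_mul_mul_self h2, map_swap] at h
  rw [← sub_eq_zero.mpr h]
  noncomm_ring

theorem forall_map_mul_or_forall_map_mul_swap (hf : IsJordanHom f) (h2 : IsSMulRegular S 2)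
    (hS : IsPrimeRing S) (hsurj : Function.Surjective f) :
    (∀ a b, f (a * b) = f a * f b) ∨ ∀ a b, f (a * b) = f b * f a := by
  let mulDefect : R →+ R →+ S :=
    AddMonoidHom.mul.compr₂ f - (AddMonoidHom.mul.comp f).compl₂ f
  let swapDefect : R →+ R →+ S :=
    AddMonoidHom.mul.compr₂ f - (AddMonoidHom.mul.flip.comp f).compl₂ f
  have pointwise (a : R) : mulDefect a = 0 ∨ swapDefect a = 0 :=
    eq_zero_or_eq_zero_of_forall_apply fun b =>
      (hf.map_mul_eq_or_map_mul_eq_swap h2 hS hsurj a b).imp sub_eq_zero.mpr sub_eq_zero.mpr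
  refine (eq_zero_or_eq_zero_of_forall_apply pointwise).imp (fun h a b => ?_) fun h a b => ?_
  · exact sub_eq_zero.mp (DFunLike.congr_fun (DFunLike.congr_fun h a) b)
  · exact sub_eq_zero.mp (DFunLike.congr_fun (DFunLike.congr_fun h a) b)

end IsJordanHom

theorem eq_of_add_self_eq_add_self (K : Type*) {M : Type*} [Field K] [NeZero (2 : K)]
    [AddCommGroup M] [Module K M] {x y : M} (h : x + x = y + y) : x = y :=
  smul_right_injective M (two_ne_zero (α := K)) (by simpa only [two_smul] using h)

theorem isLinearMap_of_apply_apply_eq {R M N : Type*} [CommRing R] [AddCommGroup M]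
    [Module R M] [AddCommGroup N] [Module R N] (B : M →ₗ[R] M →ₗ[R] R) {B' : N →ₗ[R] N →ₗ[R] R}
    (hB' : B'.SeparatingLeft) {φ : M → N} (hspan : Submodule.span R (Set.range φ) = ⊤)
    (hφ : ∀ a b, B' (φ a) (φ b) = B a b) : IsLinearMap R φ := by
  have ext {y z : N} (h : ∀ c, B' y (φ c) = B' z (φ c)) : y = z :=
    LinearMap.ker_eq_bot.mp (LinearMap.separatingLeft_iff_ker_eq_bot.mp hB')
      (LinearMap.ext_on_range hspan h)
  exact ⟨fun a b => ext fun c => by simp [hφ], fun r a => ext fun c => by simp [hφ]⟩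

/-- A nondegenerate trace on an algebra: a linear functional `τ` with `τ (a * b) = τ (b * a)` for
which the bilinear form `(a, b) ↦ τ (a * b)` is nondegenerate. -/
structure IsNondegenerateTrace {K R : Type*} [Semiring K] [NonUnitalNonAssocSemiring R]
    [Module K R] (τ : R →ₗ[K] K) : Prop where
  map_mul_comm (a b : R) : τ (a * b) = τ (b * a)
  eq_zero_of_forall_map_mul (a : R) : (∀ b, τ (a * b) = 0) → a = 0

namespace IsNondegenerateTrace

variable {K R : Type*} [CommRing K] [NonUnitalRing R] [Module K R] {τ : R →ₗ[K] K}

theorem two_mul_map_mul (hτ : IsNondegenerateTrace τ) (a b : R) :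
    2 * τ (a * b) = τ ((a + b) * (a + b)) - τ (a * a) - τ (b * b) := by
  have expand : (a + b) * (a + b) = a * a + a * b + b * a + b * b := by noncomm_ring
  simp only [expand, map_add, hτ.map_mul_comm b a]
  ring

theorem six_mul_map_mul_mul (hτ : IsNondegenerateTrace τ) (a b : R) :
    6 * τ (b * b * a) = τ ((b + a) * (b + a) * (b + a)) - τ ((b - a) * (b - a) * (b - a)) -
      2 * τ (a * a * a) := by
  have expand : (b + a) * (b + a) * (b + a) - (b - a) * (b - a) * (b - a) =
      2 • (b * b * a + b * a * b + a * b * b + a * a * a) := by noncomm_ring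
  have cycle : τ (b * a * b) = τ (b * b * a) := by rw [hτ.map_mul_comm, mul_assoc]
  have cycle' : τ (a * b * b) = τ (b * b * a) := by rw [mul_assoc, hτ.map_mul_comm]
  rw [← map_sub, expand, map_nsmul]
  simp only [map_add, cycle, cycle', nsmul_eq_mul]
  ring

theorem ext_of_surjective (hτ : IsNondegenerateTrace τ) {ι : Type*} {φ : ι → R}
    (hφ : Function.Surjective φ) {x y : R} (h : ∀ c, τ (x * φ c) = τ (y * φ c)) : x = y := by
  refine sub_eq_zero.mp (hτ.eq_zero_of_forall_map_mul _ (hφ.forall.mpr fun c => ?_))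
  rw [sub_mul, map_sub, h, sub_self]

end IsNondegenerateTrace

/-- An operational 2-local homomorphism relative to the functionals `τR`, `τS`: a map `φ` for
which every sum `φ a + φ b` is the image of `a + b` under an algebra homomorphism, depending on
`a` and `b`, that carries `τR` to `τS`. -/
def IsTwoLocalHom {K R S : Type*} [Semiring K] [NonUnitalNonAssocSemiring R]
    [NonUnitalNonAssocSemiring S] [Module K R] [Module K S] (τR : R →ₗ[K] K) (τS : S →ₗ[K] K)
    (φ : R → S) : Prop :=
  ∀ a b, ∃ ψ : R →ₙₐ[K] S, (∀ r, τS (ψ r) = τR r) ∧ φ a + φ b = ψ (a + b)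

namespace IsTwoLocalHom

variable {K R S : Type*} [Field K] [NeZero (2 : K)] [NonUnitalRing R] [NonUnitalRing S]
  [Module K R] [Module K S] {τR : R →ₗ[K] K} {τS : S →ₗ[K] K} {φ : R → S}

theorem exists_apply_eq (hφ : IsTwoLocalHom τR τS φ) (a : R) :
    ∃ ψ : R →ₙₐ[K] S, (∀ r, τS (ψ r) = τR r) ∧ φ a = ψ a := by
  obtain ⟨ψ, hψ, h⟩ := hφ a a
  exact ⟨ψ, hψ, eq_of_add_self_eq_add_self K (h.trans (map_add ψ a a))⟩

theorem map_mul_self_eq (hφ : IsTwoLocalHom τR τS φ) (a : R) :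
    τS (φ a * φ a) = τR (a * a) := by
  obtain ⟨ψ, hψ, h⟩ := hφ.exists_apply_eq a
  rw [h, ← map_mul, hψ]

theorem map_mul_mul_self_eq (hφ : IsTwoLocalHom τR τS φ) (a : R) :
    τS (φ a * φ a * φ a) = τR (a * a * a) := by
  obtain ⟨ψ, hψ, h⟩ := hφ.exists_apply_eq a
  rw [h, ← map_mul, ← map_mul, hψ]

theorem map_mul_eq (hφ : IsTwoLocalHom τR τS φ) (hR : IsNondegenerateTrace τR)
    (hS : IsNondegenerateTrace τS) (a b : R) : τS (φ a * φ b) = τR (a * b) := by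
  have map_sum : τS ((φ a + φ b) * (φ a + φ b)) = τR ((a + b) * (a + b)) := by
    obtain ⟨ψ, hψ, h⟩ := hφ a b
    rw [h, ← map_mul, hψ]
  refine mul_left_cancel₀ (two_ne_zero (α := K)) ?_
  rw [hS.two_mul_map_mul, hR.two_mul_map_mul, map_sum, hφ.map_mul_self_eq, hφ.map_mul_self_eq]

theorem injective (hφ : IsTwoLocalHom τR τS φ) (hR : IsNondegenerateTrace τR)
    (hS : IsNondegenerateTrace τS) : Function.Injective φ := fun a b h =>
  hR.ext_of_surjective Function.surjective_id fun c => by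
    rw [← hφ.map_mul_eq hR hS, h, hφ.map_mul_eq hR hS]

variable [IsScalarTower K R R] [SMulCommClass K R R] [IsScalarTower K S S] [SMulCommClass K S S]

theorem isLinearMap (hφ : IsTwoLocalHom τR τS φ) (hR : IsNondegenerateTrace τR)
    (hS : IsNondegenerateTrace τS) (hspan : Submodule.span K (Set.range φ) = ⊤) :
    IsLinearMap K φ :=
  isLinearMap_of_apply_apply_eq ((LinearMap.mul K R).compr₂ τR)
    (B' := (LinearMap.mul K S).compr₂ τS) hS.eq_zero_of_forall_map_mul hspan (hφ.map_mul_eq hR hS)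

theorem surjective (hφ : IsTwoLocalHom τR τS φ) (hR : IsNondegenerateTrace τR)
    (hS : IsNondegenerateTrace τS) (hspan : Submodule.span K (Set.range φ) = ⊤) :
    Function.Surjective φ := by
  have h : Submodule.span K (Set.range φ) = LinearMap.range ((hφ.isLinearMap hR hS hspan).mk' φ) :=
    Submodule.span_eq (LinearMap.range ((hφ.isLinearMap hR hS hspan).mk' φ))
  exact LinearMap.range_eq_top.mp (h.symm.trans hspan)

theorem map_mul_self [NeZero (3 : K)] (hφ : IsTwoLocalHom τR τS φ)
    (hR : IsNondegenerateTrace τR) (hS : IsNondegenerateTrace τS)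
    (hspan : Submodule.span K (Set.range φ) = ⊤) (b : R) : φ (b * b) = φ b * φ b := by
  have hlin := hφ.isLinearMap hR hS hspan
  have six_ne_zero : (6 : K) ≠ 0 := by
    rw [show (6 : K) = 2 * 3 by norm_num]
    exact mul_ne_zero two_ne_zero three_ne_zero
  refine hS.ext_of_surjective (hφ.surjective hR hS hspan) fun a => ?_
  rw [hφ.map_mul_eq hR hS]
  refine mul_left_cancel₀ six_ne_zero ?_
  rw [hS.six_mul_map_mul_mul, hR.six_mul_map_mul_mul, ← hlin.map_add, ← hlin.map_sub,
    hφ.map_mul_mul_self_eq, hφ.map_mul_mul_self_eq, hφ.map_mul_mul_self_eq]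

theorem forall_map_mul_or_forall_map_mul_swap [NeZero (3 : K)]
    (hφ : IsTwoLocalHom τR τS φ) (hR : IsNondegenerateTrace τR) (hS : IsNondegenerateTrace τS)
    (hspan : Submodule.span K (Set.range φ) = ⊤) (hprime : IsPrimeRing S) :
    (∀ a b, φ (a * b) = φ a * φ b) ∨ ∀ a b, φ (a * b) = φ b * φ a := by
  have jordan : IsJordanHom ((hφ.isLinearMap hR hS hspan).mk' φ).toAddMonoidHom :=
    hφ.map_mul_self hR hS hspan
  refine jordan.forall_map_mul_or_forall_map_mul_swap (fun x y h => ?_) hprime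
    (hφ.surjective hR hS hspan)
  exact eq_of_add_self_eq_add_self K (by simpa only [two_smul] using h)

end IsTwoLocalHom

/-- Minimal idempotents over `𝕜`, in the sense of Banach algebra theory: nonzero idempotents `p`
whose corner `p A p` consists of the scalar multiples of `p`. -/
def IsMinimalIdempotent (𝕜 : Type*) {A : Type*} [NonUnitalNonAssocSemiring A] [SMul 𝕜 A]
    (p : A) : Prop :=
  p ≠ 0 ∧ IsIdempotentElem p ∧ ∀ a, ∃ c : 𝕜, p * a * p = c • p

theorem isMinimalIdempotent_map_iff {𝕜 A B : Type*} [Semiring 𝕜] [NonUnitalNonAssocSemiring A]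
    [NonUnitalNonAssocSemiring B] [Module 𝕜 A] [Module 𝕜 B] {θ : A →ₙₐ[𝕜] B}
    (hθ : Function.Bijective θ) {p : A} :
    IsMinimalIdempotent 𝕜 (θ p) ↔ IsMinimalIdempotent 𝕜 p := by
  simp only [IsMinimalIdempotent, IsIdempotentElem, hθ.2.forall, ← map_mul, ← map_smul,
    hθ.1.eq_iff, ne_eq, map_eq_zero_iff θ hθ.1]

theorem dualTensorHom_injective_of_free {R M N : Type*} [CommRing R] [AddCommGroup M]
    [AddCommGroup N] [Module R M] [Module R N] [Module.Free R N] :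
    Function.Injective (dualTensorHom R M N) := by
  classical
  let b := Module.Free.chooseBasis R N
  have apply_eq_coord (x) (i) :
      TensorProduct.equivFinsuppOfBasisRight b x i = b.coord i ∘ₗ dualTensorHom R M N x := by
    induction x with
    | zero => simp
    | tmul f y => ext v; simp [mul_comm]
    | add x y hx hy => simp [hx, hy, LinearMap.comp_add]
  refine (injective_iff_map_eq_zero _).mpr fun x hx => ?_
  refine (TensorProduct.equivFinsuppOfBasisRight b).map_eq_zero_iff.mp (Finsupp.ext fun i => ?_)
  rw [apply_eq_coord, hx, LinearMap.comp_zero, Finsupp.zero_apply]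

section FiniteRank

open scoped TensorProduct

variable {𝕜 E : Type*} [Field 𝕜] [TopologicalSpace 𝕜] [AddCommGroup E] [TopologicalSpace E]
  [Module 𝕜 E]

theorem exists_apply_eq_one_of_ne_zero [IsTopologicalRing 𝕜] [SeparatingDual 𝕜 E] {T : E →L[𝕜] E}
    (hT : T ≠ 0) : ∃ (f : E →L[𝕜] 𝕜) (x : E), f (T x) = 1 := by
  obtain ⟨x, hx⟩ := DFunLike.ne_iff.mp hT
  obtain ⟨f, hf⟩ := SeparatingDual.exists_eq_one (R := 𝕜) hx
  exact ⟨f, x, hf⟩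

variable [ContinuousSMul 𝕜 E]

/-- Rank-one idempotents, presented as `x ⊗ f` with `f x = 1`. -/
def IsRankOneIdempotent (p : E →L[𝕜] E) : Prop :=
  ∃ (f : E →L[𝕜] 𝕜) (x : E), f x = 1 ∧ p = f.smulRight x

namespace IsRankOneIdempotent

variable {p : E →L[𝕜] E}

theorem isIdempotentElem (hp : IsRankOneIdempotent p) : IsIdempotentElem p := by
  obtain ⟨f, x, hfx, rfl⟩ := hp
  ext v
  simp [hfx]

theorem rank_eq_one (hp : IsRankOneIdempotent p) : LinearMap.rank (p : E →ₗ[𝕜] E) = 1 := by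
  obtain ⟨f, x, hfx, rfl⟩ := hp
  have hx : x ≠ 0 := by rintro rfl; simp at hfx
  have hf : f ≠ 0 := by rintro rfl; simp at hfx
  rw [LinearMap.rank, ContinuousLinearMap.range_smulRight_apply hf]
  exact Module.rank_eq_one_iff_finrank_eq_one.mpr (finrank_span_singleton hx)

end IsRankOneIdempotent

variable [IsTopologicalAddGroup E]

variable (𝕜 E) in
/-- The algebra `F(E)` of continuous finite-rank operators on `E`, as a non-unital algebra. -/
def finiteRankOperators : NonUnitalSubalgebra 𝕜 (E →L[𝕜] E) where
  carrier := {T | LinearMap.rank (T : E →ₗ[𝕜] E) < ℵ₀}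
  add_mem' hS hT := (LinearMap.rank_add_le _ _).trans_lt (add_lt_aleph0 hS hT)
  zero_mem' := LinearMap.rank_zero.trans_lt aleph0_pos
  mul_mem' _ hT := (LinearMap.rank_comp_le_right _ _).trans_lt hT
  smul_mem' c T hT := by
    have h := LinearMap.rank_comp_le_right (T : E →ₗ[𝕜] E) (c • LinearMap.id)
    exact h.trans_lt hT

theorem mem_finiteRankOperators {T : E →L[𝕜] E} :
    T ∈ finiteRankOperators 𝕜 E ↔ LinearMap.rank (T : E →ₗ[𝕜] E) < ℵ₀ :=
  Iff.rfl

namespace finiteRankOperators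

/-- The operator `v ↦ f v • x`, also written `x ⊗ f`, as an element of `F(E)`. -/
def rankOne (f : E →L[𝕜] 𝕜) (x : E) : finiteRankOperators 𝕜 E :=
  ⟨f.smulRight x, mem_finiteRankOperators.mpr <|
    (LinearMap.rank_comp_le_left (f : E →ₗ[𝕜] 𝕜) (LinearMap.toSpanSingleton 𝕜 E x)).trans_lt <|
      Module.rank_lt_aleph0 𝕜 _⟩

@[simp]
theorem coe_rankOne (f : E →L[𝕜] 𝕜) (x : E) : (rankOne f x : E →L[𝕜] E) = f.smulRight x :=
  rfl

theorem mul_rankOne (T : finiteRankOperators 𝕜 E) (f : E →L[𝕜] 𝕜) (x : E) :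
    T * rankOne f x = rankOne f ((T : E →L[𝕜] E) x) := by
  ext v
  simp

theorem rankOne_mul (T : finiteRankOperators 𝕜 E) (f : E →L[𝕜] 𝕜) (x : E) :
    rankOne f x * T = rankOne (f.comp (T : E →L[𝕜] E)) x := by
  ext v
  simp

/-- The trace on `F(E)`, obtained by identifying finite-rank operators with tensors in `E* ⊗ E` and
contracting. -/
noncomputable def trace : finiteRankOperators 𝕜 E →ₗ[𝕜] 𝕜 :=
  contractLeft 𝕜 E ∘ₗ
    LinearMap.leftInverse (V := Module.Dual 𝕜 E ⊗[𝕜] E) (V' := E →ₗ[𝕜] E) (dualTensorHom 𝕜 E E) ∘ₗ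
    ContinuousLinearMap.coeLM 𝕜 ∘ₗ (finiteRankOperators 𝕜 E).toSubmodule.subtype

@[simp]
theorem trace_rankOne (f : E →L[𝕜] 𝕜) (x : E) :
    trace (rankOne f x) = f x := by
  have inv : LinearMap.leftInverse (V := Module.Dual 𝕜 E ⊗[𝕜] E) (V' := E →ₗ[𝕜] E)
      (dualTensorHom 𝕜 E E) (dualTensorHom 𝕜 E E (f.toLinearMap ⊗ₜ x)) = f.toLinearMap ⊗ₜ x :=
    LinearMap.leftInverse_apply_of_inj
      (LinearMap.ker_eq_bot.mpr dualTensorHom_injective_of_free) _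
  exact (congrArg (contractLeft 𝕜 E) inv).trans (contractLeft_apply _ _)

theorem exists_eq_sum_rankOne [IsTopologicalRing 𝕜] [SeparatingDual 𝕜 E]
    (T : finiteRankOperators 𝕜 E) :
    ∃ (n : ℕ) (f : Fin n → E →L[𝕜] 𝕜) (x : Fin n → E), T = ∑ i, rankOne (f i) (x i) := by
  let W := LinearMap.range ((T : E →L[𝕜] E) : E →ₗ[𝕜] E)
  have : FiniteDimensional 𝕜 W := Module.rank_lt_aleph0_iff.mp T.2
  let b := Module.finBasis 𝕜 W
  have extend (i) : ∃ g : E →L[𝕜] 𝕜, ∀ w : W, g w = b.repr w i := by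
    obtain ⟨g, hg⟩ := SeparatingDual.dualMap_surjective_iff.mpr W.injective_subtype (b.coord i)
    exact ⟨g, LinearMap.congr_fun hg⟩
  choose g hg using extend
  refine ⟨_, fun i => (g i).comp (T : E →L[𝕜] E), fun i => b i, ?_⟩
  ext v
  let w : W := ⟨(T : E →L[𝕜] E) v, v, rfl⟩
  calc (T : E →L[𝕜] E) v
    _ = ((∑ i, b.repr w i • b i : W) : E) := by rw [b.sum_repr]
    _ = ∑ i, b.repr w i • (b i : E) := by simp only [Submodule.coe_sum, Submodule.coe_smul]
    _ = _ := by simp [← hg _ w, w]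

theorem isPrimeRing [IsTopologicalRing 𝕜] [SeparatingDual 𝕜 E] :
    IsPrimeRing (finiteRankOperators 𝕜 E) := by
  intro S T h
  by_contra! hne
  obtain ⟨x, hx⟩ := DFunLike.ne_iff.mp (Subtype.coe_ne_coe.mpr hne.1)
  obtain ⟨f, y, hy⟩ := exists_apply_eq_one_of_ne_zero (Subtype.coe_ne_coe.mpr hne.2)
  have hxy := DFunLike.congr_fun (congrArg Subtype.val (h (rankOne f x))) y
  exact hx (by simpa [hy] using hxy)

theorem isNondegenerateTrace_trace [IsTopologicalRing 𝕜] [SeparatingDual 𝕜 E] :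
    IsNondegenerateTrace (trace : finiteRankOperators 𝕜 E →ₗ[𝕜] 𝕜) where
  map_mul_comm S T := by
    obtain ⟨n, f, x, rfl⟩ := exists_eq_sum_rankOne T
    simp only [Finset.mul_sum, Finset.sum_mul, map_sum, mul_rankOne, rankOne_mul, trace_rankOne,
      ContinuousLinearMap.comp_apply]
  eq_zero_of_forall_map_mul T h := by
    by_contra hT
    obtain ⟨f, x, hx⟩ := exists_apply_eq_one_of_ne_zero (Subtype.coe_ne_coe.mpr hT)
    have apply_eq_zero := h (rankOne f x)
    rw [mul_rankOne, trace_rankOne, hx] at apply_eq_zero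
    exact one_ne_zero apply_eq_zero

end finiteRankOperators

open finiteRankOperators

namespace IsRankOneIdempotent

theorem mem_finiteRankOperators {p : E →L[𝕜] E} (hp : IsRankOneIdempotent p) :
    p ∈ finiteRankOperators 𝕜 E :=
  hp.rank_eq_one.trans_lt one_lt_aleph0

theorem trace_eq_one {p : finiteRankOperators 𝕜 E} (hp : IsRankOneIdempotent (p : E →L[𝕜] E)) :
    trace p = 1 := by
  obtain ⟨f, x, hfx, hp⟩ := hp
  rw [show p = rankOne f x from Subtype.ext hp, trace_rankOne, hfx]

theorem span_eq_top [IsTopologicalRing 𝕜] [SeparatingDual 𝕜 E] :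
    Submodule.span 𝕜 {p : finiteRankOperators 𝕜 E | IsRankOneIdempotent (p : E →L[𝕜] E)} = ⊤ := by
  set P := Submodule.span 𝕜 {p : finiteRankOperators 𝕜 E | IsRankOneIdempotent (p : E →L[𝕜] E)}
  have mem_of_eq_one (f : E →L[𝕜] 𝕜) (x : E) (hfx : f x = 1) : rankOne f x ∈ P :=
    Submodule.subset_span ⟨f, x, hfx, rfl⟩
  have rankOne_mem (f : E →L[𝕜] 𝕜) (x : E) : rankOne f x ∈ P := by
    rcases eq_or_ne x 0 with rfl | hx
    · convert P.zero_mem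
      ext v
      simp
    rcases eq_or_ne (f x) 0 with hfx | hfx
    · obtain ⟨g, hg⟩ := SeparatingDual.exists_eq_one (R := 𝕜) hx
      convert P.sub_mem (mem_of_eq_one (f + g) x (by simp [hfx, hg])) (mem_of_eq_one g x hg)
      ext v
      simp [add_smul]
    · convert P.smul_mem (f x) (mem_of_eq_one ((f x)⁻¹ • f) x (by simp [hfx]))
      ext v
      simp [smul_smul, hfx]
  refine eq_top_iff.mpr fun T _ => ?_
  obtain ⟨n, f, x, rfl⟩ := exists_eq_sum_rankOne T
  exact P.sum_mem fun i _ => rankOne_mem (f i) (x i)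

end IsRankOneIdempotent

section StandardOperatorAlgebra

variable {A : NonUnitalSubalgebra 𝕜 (E →L[𝕜] E)}

theorem IsRankOneIdempotent.isMinimalIdempotent {p : A}
    (hp : IsRankOneIdempotent (p : E →L[𝕜] E)) : IsMinimalIdempotent 𝕜 p := by
  refine ⟨?_, Subtype.ext hp.isIdempotentElem, fun T => ?_⟩
  all_goals obtain ⟨f, x, hfx, hp⟩ := hp
  · rintro rfl
    have apply_eq_zero := congrArg f (DFunLike.congr_fun hp x)
    simp [hfx] at apply_eq_zero
  · refine ⟨f ((T : E →L[𝕜] E) x), ?_⟩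
    ext v
    simp [hp, smul_smul, mul_comm]

variable [IsTopologicalRing 𝕜] [SeparatingDual 𝕜 E]

theorem IsMinimalIdempotent.isRankOneIdempotent (hA : finiteRankOperators 𝕜 E ≤ A) {p : A}
    (hp : IsMinimalIdempotent 𝕜 p) : IsRankOneIdempotent (p : E →L[𝕜] E) := by
  obtain ⟨p_ne, p_idem, p_corner⟩ := hp
  obtain ⟨g, w, hw⟩ := exists_apply_eq_one_of_ne_zero (Subtype.coe_ne_coe.mpr p_ne)
  set x := (p : E →L[𝕜] E) w
  have px : (p : E →L[𝕜] E) x = x := DFunLike.congr_fun (congrArg Subtype.val p_idem) w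
  refine ⟨g.comp (p : E →L[𝕜] E), x, by simp [px, hw], ?_⟩
  ext v
  obtain ⟨c, hc⟩ := p_corner ⟨rankOne g v, hA (rankOne g v).2⟩
  have pv : (p : E →L[𝕜] E) v = c • x := by
    simpa [px, hw] using DFunLike.congr_fun (congrArg Subtype.val hc) x
  simp [pv, hw]

variable {θ : A →ₙₐ[𝕜] A}

theorem isRankOneIdempotent_map_iff (hA : finiteRankOperators 𝕜 E ≤ A)
    (hθ : Function.Bijective θ) {p : A} :
    IsRankOneIdempotent (θ p : E →L[𝕜] E) ↔ IsRankOneIdempotent (p : E →L[𝕜] E) := by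
  have minimal_iff (q : A) : IsMinimalIdempotent 𝕜 q ↔ IsRankOneIdempotent (q : E →L[𝕜] E) :=
    ⟨fun hq => hq.isRankOneIdempotent hA, fun hq => hq.isMinimalIdempotent⟩
  rw [← minimal_iff, ← minimal_iff, isMinimalIdempotent_map_iff hθ]

theorem map_mem_finiteRankOperators (hA : finiteRankOperators 𝕜 E ≤ A) (hθ : Function.Bijective θ)
    (T : finiteRankOperators 𝕜 E) :
    (θ (NonUnitalSubalgebra.inclusion hA T) : E →L[𝕜] E) ∈ finiteRankOperators 𝕜 E := by
  let L : finiteRankOperators 𝕜 E →ₗ[𝕜] E →L[𝕜] E :=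
    ((NonUnitalSubalgebraClass.subtype A).comp (θ.comp (NonUnitalSubalgebra.inclusion hA)) :
      finiteRankOperators 𝕜 E →ₙₐ[𝕜] E →L[𝕜] E)
  suffices (⊤ : Submodule 𝕜 _) ≤ (finiteRankOperators 𝕜 E).toSubmodule.comap L from
    this (Submodule.mem_top (x := T))
  rw [← IsRankOneIdempotent.span_eq_top, Submodule.span_le]
  intro p hp
  have map_p : IsRankOneIdempotent (θ (NonUnitalSubalgebra.inclusion hA p) : E →L[𝕜] E) :=
    (isRankOneIdempotent_map_iff hA hθ).mpr hp
  exact map_p.mem_finiteRankOperators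

theorem exists_restrict_finiteRankOperators (hA : finiteRankOperators 𝕜 E ≤ A)
    (hθ : Function.Bijective θ) :
    ∃ ψ : finiteRankOperators 𝕜 E →ₙₐ[𝕜] finiteRankOperators 𝕜 E,
      (∀ T, trace (ψ T) = trace T) ∧
      ∀ T, (ψ T : E →L[𝕜] E) = θ (NonUnitalSubalgebra.inclusion hA T) := by
  let ψ : finiteRankOperators 𝕜 E →ₙₐ[𝕜] finiteRankOperators 𝕜 E :=
    NonUnitalAlgHom.codRestrict ((NonUnitalSubalgebraClass.subtype A).comp
      (θ.comp (NonUnitalSubalgebra.inclusion hA))) _ (map_mem_finiteRankOperators hA hθ)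
  refine ⟨ψ, fun T => ?_, fun T => rfl⟩
  have map_trace : trace ∘ₗ (ψ : finiteRankOperators 𝕜 E →ₗ[𝕜] finiteRankOperators 𝕜 E) = trace :=
    LinearMap.ext_on IsRankOneIdempotent.span_eq_top fun p hp => by
      have hψp : IsRankOneIdempotent (ψ p : E →L[𝕜] E) :=
        (isRankOneIdempotent_map_iff hA hθ).mpr hp
      exact hψp.trace_eq_one.trans hp.trace_eq_one.symm
  exact LinearMap.congr_fun map_trace T

theorem exists_restrict_of_forall_exists_add_eq [NeZero (2 : 𝕜)] [NeZero (3 : 𝕜)]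
    (hA : finiteRankOperators 𝕜 E ≤ A) {φ : A → A}
    (hrange : ∀ p : E →L[𝕜] E, IsRankOneIdempotent p → ∃ a, (φ a : E →L[𝕜] E) = p)
    (hφ : ∀ a b, ∃ θ : A →ₙₐ[𝕜] A, Function.Bijective θ ∧ φ a + φ b = θ (a + b)) :
    ∃ φF : finiteRankOperators 𝕜 E → finiteRankOperators 𝕜 E,
      (∀ (a : A) (ha : (a : E →L[𝕜] E) ∈ finiteRankOperators 𝕜 E),
        φ a = NonUnitalSubalgebra.inclusion hA (φF ⟨a, ha⟩)) ∧
      IsLinearMap 𝕜 φF ∧ Function.Bijective φF ∧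
      ((∀ S T, φF (S * T) = φF S * φF T) ∨ ∀ S T, φF (S * T) = φF T * φF S) := by
  have exists_apply_eq (a : A) : ∃ θ : A →ₙₐ[𝕜] A, Function.Bijective θ ∧ φ a = θ a := by
    obtain ⟨θ, hθ, h⟩ := hφ a a
    exact ⟨θ, hθ, eq_of_add_self_eq_add_self 𝕜 (h.trans (map_add θ a a))⟩
  have mem (T) : (φ (NonUnitalSubalgebra.inclusion hA T) : E →L[𝕜] E) ∈
      finiteRankOperators 𝕜 E := by
    obtain ⟨θ, hθ, h⟩ := exists_apply_eq (NonUnitalSubalgebra.inclusion hA T)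
    exact h ▸ map_mem_finiteRankOperators hA hθ T
  let φF (T) : finiteRankOperators 𝕜 E := ⟨φ (NonUnitalSubalgebra.inclusion hA T), mem T⟩
  have twoLocal : IsTwoLocalHom trace trace φF := fun S T => by
    obtain ⟨θ, hθ, h⟩ := hφ (NonUnitalSubalgebra.inclusion hA S)
      (NonUnitalSubalgebra.inclusion hA T)
    obtain ⟨ψ, trace_ψ, hψ⟩ := exists_restrict_finiteRankOperators hA hθ
    exact ⟨ψ, trace_ψ, Subtype.ext ((congrArg Subtype.val h).trans (hψ (S + T)).symm)⟩
  have span_range : Submodule.span 𝕜 (Set.range φF) = ⊤ := by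
    rw [eq_top_iff, ← IsRankOneIdempotent.span_eq_top]
    refine Submodule.span_mono fun p hp => ?_
    obtain ⟨a, ha⟩ := hrange p hp
    obtain ⟨θ, hθ, h⟩ := exists_apply_eq a
    have a_rankOne : IsRankOneIdempotent (a : E →L[𝕜] E) :=
      (isRankOneIdempotent_map_iff hA hθ).mp (by rwa [← h, ha])
    exact ⟨⟨a, a_rankOne.mem_finiteRankOperators⟩, Subtype.ext ha⟩
  have hτ := isNondegenerateTrace_trace (𝕜 := 𝕜) (E := E)
  exact ⟨φF, fun _ _ => rfl, twoLocal.isLinearMap hτ hτ span_range,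
    ⟨twoLocal.injective hτ hτ, twoLocal.surjective hτ hτ span_range⟩,
    twoLocal.forall_map_mul_or_forall_map_mul_swap hτ hτ span_range isPrimeRing⟩

end StandardOperatorAlgebra

end FiniteRank

theorem stmt3_general {𝕜 E : Type*} [Field 𝕜] [NeZero (2 : 𝕜)] [NeZero (3 : 𝕜)]
    [TopologicalSpace 𝕜] [IsTopologicalRing 𝕜] [AddCommGroup E] [TopologicalSpace E]
    [IsTopologicalAddGroup E] [Module 𝕜 E] [ContinuousSMul 𝕜 E] [SeparatingDual 𝕜 E]
    (A : NonUnitalSubalgebra 𝕜 (E →L[𝕜] E))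
    (hA : ∀ T : E →L[𝕜] E, LinearMap.rank (T : E →ₗ[𝕜] E) < ℵ₀ → T ∈ A) (φ : A → A)
    (hrange : ∀ p : E →L[𝕜] E, p * p = p → LinearMap.rank (p : E →ₗ[𝕜] E) = 1 →
      ∃ a : A, (φ a : E →L[𝕜] E) = p)
    (hφ : ∀ a b : A, ∃ θ : A →ₙₐ[𝕜] A, Function.Bijective θ ∧ φ a + φ b = θ (a + b)) :
    (∀ a : A, LinearMap.rank ((a : E →L[𝕜] E) : E →ₗ[𝕜] E) < ℵ₀ →
        LinearMap.rank ((φ a : E →L[𝕜] E) : E →ₗ[𝕜] E) < ℵ₀) ∧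
    (∀ b : A, LinearMap.rank ((b : E →L[𝕜] E) : E →ₗ[𝕜] E) < ℵ₀ →
        ∃ a : A, LinearMap.rank ((a : E →L[𝕜] E) : E →ₗ[𝕜] E) < ℵ₀ ∧ φ a = b) ∧
    (∀ a b : A, LinearMap.rank ((a : E →L[𝕜] E) : E →ₗ[𝕜] E) < ℵ₀ →
        LinearMap.rank ((b : E →L[𝕜] E) : E →ₗ[𝕜] E) < ℵ₀ → φ a = φ b → a = b) ∧
    (∀ (c₁ c₂ : 𝕜) (a b : A), LinearMap.rank ((a : E →L[𝕜] E) : E →ₗ[𝕜] E) < ℵ₀ →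
        LinearMap.rank ((b : E →L[𝕜] E) : E →ₗ[𝕜] E) < ℵ₀ →
        φ (c₁ • a + c₂ • b) = c₁ • φ a + c₂ • φ b) ∧
    ((∀ a b : A, LinearMap.rank ((a : E →L[𝕜] E) : E →ₗ[𝕜] E) < ℵ₀ →
        LinearMap.rank ((b : E →L[𝕜] E) : E →ₗ[𝕜] E) < ℵ₀ → φ (a * b) = φ a * φ b) ∨
     (∀ a b : A, LinearMap.rank ((a : E →L[𝕜] E) : E →ₗ[𝕜] E) < ℵ₀ →
        LinearMap.rank ((b : E →L[𝕜] E) : E →ₗ[𝕜] E) < ℵ₀ → φ (a * b) = φ b * φ a)) := by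
  obtain ⟨φF, hφF, linear, ⟨injective, surjective⟩, multiplicative⟩ :=
    exists_restrict_of_forall_exists_add_eq hA
      (fun p hp => hrange p hp.isIdempotentElem hp.rank_eq_one) hφ
  refine ⟨fun a ha => ?_, fun b hb => ?_, fun a b ha hb h => ?_, fun c₁ c₂ a b ha hb => ?_,
    multiplicative.imp (fun h a b ha hb => ?_) fun h a b ha hb => ?_⟩
  · exact hφF a ha ▸ (φF ⟨a, ha⟩).2
  · obtain ⟨a, ha⟩ := surjective ⟨b, hb⟩
    exact ⟨⟨a, hA _ a.2⟩, a.2, by rw [hφF _ a.2, ha]; rfl⟩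
  · rw [hφF a ha, hφF b hb] at h
    have restrict_eq := injective (NonUnitalSubalgebra.inclusion_injective hA h)
    exact Subtype.ext (Subtype.mk.inj restrict_eq)
  · have map_comb : φF (c₁ • ⟨a, ha⟩ + c₂ • ⟨b, hb⟩) = c₁ • φF ⟨a, ha⟩ + c₂ • φF ⟨b, hb⟩ := by
      rw [linear.map_add, linear.map_smul, linear.map_smul]
    rw [hφF a ha, hφF b hb, ← map_smul, ← map_smul, ← map_add, ← map_comb]
    exact hφF (c₁ • a + c₂ • b) _
  · rw [hφF a ha, hφF b hb, ← map_mul, ← h]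
    exact hφF (a * b) _
  · rw [hφF a ha, hφF b hb, ← map_mul, ← h]
    exact hφF (a * b) _

/-- An algebra automorphism in the sense of `IsAlgAutomorphism`, bundled as a morphism of non-unital
algebras. -/
def IsAlgAutomorphism.toNonUnitalAlgHom {A : Type*} [Ring A] [Algebra ℂ A] {θ : A → A}
    (hθ : IsAlgAutomorphism θ) : A →ₙₐ[ℂ] A where
  toFun := θ
  map_smul' := hθ.2.1.map_smul
  map_zero' := hθ.2.1.map_zero
  map_add' := hθ.2.1.map_add
  map_mul' := hθ.2.2

theorem stmt3 {E : Type*} [NormedAddCommGroup E] [NormedSpace ℂ E] [CompleteSpace E]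
    -- `E` has dimension at least three
    (hE : 3 ≤ Module.rank ℂ E)
    (A : Subalgebra ℂ (E →L[ℂ] E))
    -- `A` is a standard operator algebra: it contains every bounded finite-rank operator
    (hA : ∀ T : E →L[ℂ] E, LinearMap.rank (T : E →ₗ[ℂ] E) < ℵ₀ → T ∈ A)
    (φ : A → A)
    -- the range of `φ` contains all rank-one idempotent operators
    (hrange : ∀ p : E →L[ℂ] E, p * p = p → LinearMap.rank (p : E →ₗ[ℂ] E) = 1 →
      ∃ a : A, (φ a : E →L[ℂ] E) = p)
    -- operational 2-local automorphism condition
    (hφ : ∀ a b : A, ∃ θ : A → A, IsAlgAutomorphism θ ∧ φ a + φ b = θ (a + b)) :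
    -- `φ` maps finite-rank operators to finite-rank operators, and its restriction to
    -- the finite-rank operators is an algebra automorphism or anti-automorphism of `F(E)`
    (∀ a : A, LinearMap.rank ((a : E →L[ℂ] E) : E →ₗ[ℂ] E) < ℵ₀ →
        LinearMap.rank ((φ a : E →L[ℂ] E) : E →ₗ[ℂ] E) < ℵ₀) ∧
    (∀ b : A, LinearMap.rank ((b : E →L[ℂ] E) : E →ₗ[ℂ] E) < ℵ₀ →
        ∃ a : A, LinearMap.rank ((a : E →L[ℂ] E) : E →ₗ[ℂ] E) < ℵ₀ ∧ φ a = b) ∧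
    (∀ a b : A, LinearMap.rank ((a : E →L[ℂ] E) : E →ₗ[ℂ] E) < ℵ₀ →
        LinearMap.rank ((b : E →L[ℂ] E) : E →ₗ[ℂ] E) < ℵ₀ → φ a = φ b → a = b) ∧
    (∀ (c₁ c₂ : ℂ) (a b : A), LinearMap.rank ((a : E →L[ℂ] E) : E →ₗ[ℂ] E) < ℵ₀ →
        LinearMap.rank ((b : E →L[ℂ] E) : E →ₗ[ℂ] E) < ℵ₀ →
        φ (c₁ • a + c₂ • b) = c₁ • φ a + c₂ • φ b) ∧
    ((∀ a b : A, LinearMap.rank ((a : E →L[ℂ] E) : E →ₗ[ℂ] E) < ℵ₀ →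
        LinearMap.rank ((b : E →L[ℂ] E) : E →ₗ[ℂ] E) < ℵ₀ → φ (a * b) = φ a * φ b) ∨
     (∀ a b : A, LinearMap.rank ((a : E →L[ℂ] E) : E →ₗ[ℂ] E) < ℵ₀ →
        LinearMap.rank ((b : E →L[ℂ] E) : E →ₗ[ℂ] E) < ℵ₀ → φ (a * b) = φ b * φ a)) := by
  exact stmt3_general A.toNonUnitalSubalgebra hA φ hrange fun a b =>
    (hφ a b).elim fun _ h => ⟨h.1.toNonUnitalAlgHom, h.1.1, h.2⟩
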